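/- Let N ≥ 2 be an integer and s ∈ (1/2, 1). Then there exists a constant d = d(N, s) > 0 such that for every radial u ∈ C_c^∞(B) and every x ∈ B with x ≠ 0: u(x)² ≤ d·|x|^{2s−N}·Q_{N,s,B}(u), where B is the open unit ball of ℝ^N. -/

import Mathlib

open MeasureTheory Real Filter Topology Set

noncomputable section

/-- Euclidean space ℝ^N. -/
abbrev Euc (N : ℕ) := EuclideanSpace ℝ (Fin N)

/-- The normalization constant c_{N,s}. -/
def cNs (N : ℕ) (s : ℝ) : ℝ :=
  s * (4 : ℝ) ^ s * Real.Gamma (((N : ℝ) + 2 * s) / 2) /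
    (Real.pi ^ ((N : ℝ) / 2) * Real.Gamma (1 - s))

/-- The Gagliardo quadratic form Q_{N,s,U}. -/
def gagliardo (N : ℕ) (s : ℝ) (U : Set (Euc N)) (u : Euc N → ℝ) : ℝ :=
  (cNs N s / 2) * ∫ x in U, ∫ y in U, (u x - u y) ^ 2 / ‖x - y‖ ^ ((N : ℝ) + 2 * s)

/-- The L^p norm of u on a set U. -/
def lpNormOn (N : ℕ) (p : ℝ) (U : Set (Euc N)) (u : Euc N → ℝ) : ℝ :=
  (∫ x in U, |u x| ^ p) ^ (1 / p)

/-- The fractional critical Sobolev exponent 2*_s = 2N/(N-2s). -/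
def critExp (N : ℕ) (s : ℝ) : ℝ := 2 * (N : ℝ) / ((N : ℝ) - 2 * s)

/-- Smooth compactly supported test function in U. -/
def testFun (N : ℕ) (U : Set (Euc N)) (u : Euc N → ℝ) : Prop :=
  ContDiff ℝ (⊤ : ℕ∞) u ∧ HasCompactSupport u ∧ tsupport u ⊆ U

/-- The critical fractional Sobolev constant S_{N,s}(U). -/
def sobolevConst (N : ℕ) (s : ℝ) (U : Set (Euc N)) : ℝ :=
  sInf { r | ∃ u, testFun N U u ∧ ¬ (∀ x, u x = 0) ∧
    r = gagliardo N s U u / (lpNormOn N (critExp N s) U u) ^ 2 }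

/-- The open cylinder B'_r × (-r, r) in ℝ^{N-1} × ℝ. -/
def cylinder (N : ℕ) (r : ℝ) : Set (EuclideanSpace ℝ (Fin (N - 1)) × ℝ) :=
  (Metric.ball 0 r) ×ˢ (Set.Ioo (-r) r)

/-- A bounded open set is Lipschitz: near each boundary point the boundary is the
bi-Lipschitz image of a flat piece. -/
def IsLipschitzSet (N : ℕ) (Ω : Set (Euc N)) : Prop :=
  ∀ q ∈ frontier Ω, ∃ (r C : ℝ) (Φ : EuclideanSpace ℝ (Fin (N - 1)) × ℝ → Euc N),
    0 < r ∧ 1 < C ∧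
    (∀ x ∈ cylinder N r, ∀ y ∈ cylinder N r,
      C⁻¹ * dist x y ≤ dist (Φ x) (Φ y) ∧ dist (Φ x) (Φ y) ≤ C * dist x y) ∧
    IsOpen (Φ '' cylinder N r) ∧ q ∈ Φ '' cylinder N r ∧
    Φ '' ((Metric.ball 0 r) ×ˢ (Set.Ioo 0 r)) ⊆ Ω ∧
    Φ '' ((Metric.ball 0 r) ×ˢ ({0} : Set ℝ)) ⊆ frontier Ω

/-- Membership in H^s_0(U): approximation by smooth compactly supported functions
in L²(U) and in the Gagliardo form. -/
def memHs0 (N : ℕ) (s : ℝ) (U : Set (Euc N)) (u : Euc N → ℝ) : Prop :=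
  ∃ v : ℕ → Euc N → ℝ, (∀ k, testFun N U (v k)) ∧
    Tendsto (fun k => ∫ x in U, (v k x - u x) ^ 2) atTop (nhds 0) ∧
    Tendsto (fun k => gagliardo N s U (fun x => v k x - u x)) atTop (nhds 0)

/-- A radial function on ℝ^N. -/
def IsRadial (N : ℕ) (u : Euc N → ℝ) : Prop :=
  ∀ x y : Euc N, ‖x‖ = ‖y‖ → u x = u y

/-- The open unit ball of ℝ^N. -/
def unitBall (N : ℕ) : Set (Euc N) := Metric.ball 0 1

/-- The radial critical Sobolev constant S_{N,s,rad}(B,h) on the unit ball. -/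
def sobolevConstRad (N : ℕ) (s : ℝ) (h : Euc N → ℝ) : ℝ :=
  sInf { r | ∃ u, testFun N (unitBall N) u ∧ IsRadial N u ∧ ¬ (∀ x, u x = 0) ∧
    r = (gagliardo N s (unitBall N) u + ∫ x in unitBall N, h x * (u x) ^ 2) /
        (lpNormOn N (critExp N s) (unitBall N) u) ^ 2 }

/-- Membership in H^s_{0,rad}(B): radial, approximated by radial test functions. -/
def memHs0rad (N : ℕ) (s : ℝ) (u : Euc N → ℝ) : Prop :=
  IsRadial N u ∧ ∃ v : ℕ → Euc N → ℝ,
    (∀ k, testFun N (unitBall N) (v k) ∧ IsRadial N (v k)) ∧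
    Tendsto (fun k => ∫ x in unitBall N, (v k x - u x) ^ 2) atTop (nhds 0) ∧
    Tendsto (fun k => gagliardo N s (unitBall N) (fun x => v k x - u x)) atTop (nhds 0)

/-- The fractional Laplacian of a test function. -/
def fracLap (N : ℕ) (s : ℝ) (φ : Euc N → ℝ) (x : Euc N) : ℝ :=
  (cNs N s / 2) * ∫ z : Euc N, (2 * φ x - φ (x + z) - φ (x - z)) / ‖z‖ ^ ((N : ℝ) + 2 * s)


section helpers

variable {N : ℕ}

lemma vol_ball_real (p : Euc N) {r : ℝ} (hr : 0 < r) :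
    volume (Metric.ball p r) = ENNReal.ofReal (r ^ N * (volume (Metric.ball (0 : Euc N) 1)).toReal) := by
  rw [Measure.addHaar_ball_of_pos _ _ hr, ENNReal.ofReal_mul (by positivity),
    ENNReal.ofReal_toReal measure_ball_lt_top.ne]
  simp

/-- Truncated double energy. -/
def Jen (k : Euc N → Euc N → ENNReal) (p : Euc N) (h : ℝ) : ENNReal :=
  ∫⁻ x in Metric.ball p h, ∫⁻ y in Metric.ball p h, k x y

lemma Jen_rot (k : Euc N → Euc N → ENNReal)
    (hinv : ∀ (T : Euc N ≃ₗᵢ[ℝ] Euc N) x y, k (T x) (T y) = k x y)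
    {p q : Euc N} (hpq : ‖p‖ = ‖q‖) (h : ℝ) : Jen k p h = Jen k q h := by
  obtain ⟨T, hT⟩ : ∃ T : Euc N ≃ₗᵢ[ℝ] Euc N, T p = q :=
    ⟨_, Submodule.reflection_sub hpq⟩
  have hpre : T ⁻¹' Metric.ball q h = Metric.ball p h := by
    ext x
    simp only [mem_preimage, Metric.mem_ball, ← hT]
    rw [T.dist_map]
  have mp := T.measurePreserving
  have me : MeasurableEmbedding T := T.toHomeomorph.measurableEmbedding
  unfold Jen
  rw [← mp.setLIntegral_comp_preimage_emb me _ (Metric.ball q h), hpre]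
  refine lintegral_congr fun x => ?_
  rw [← mp.setLIntegral_comp_preimage_emb me _ (Metric.ball q h), hpre]
  refine lintegral_congr fun y => ?_
  rw [hinv]

lemma Jen_le_shift (k : Euc N → Euc N → ENNReal)
    (hinv : ∀ (T : Euc N ≃ₗᵢ[ℝ] Euc N) x y, k (T x) (T y) = k x y)
    {p q : Euc N} {h : ℝ} (h1 : ‖p‖ < ‖q‖) (h2 : ‖q‖ < ‖p‖ + h) :
    Jen k p h ≤ Jen k q (2 * h) := by
  have hq : 0 < ‖q‖ := (norm_nonneg _).trans_lt h1
  set p' : Euc N := (‖p‖ / ‖q‖) • q with hp'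
  have hn : ‖p‖ = ‖p'‖ := by
    rw [hp', norm_smul, Real.norm_of_nonneg (by positivity)]; field_simp
  have hd : dist p' q = ‖q‖ - ‖p‖ := by
    have : p' - q = (‖p‖ / ‖q‖ - 1) • q := by rw [sub_smul, one_smul]
    rw [dist_eq_norm, this, norm_smul, Real.norm_of_nonpos]
    · field_simp; ring
    · rw [sub_nonpos, div_le_one hq]; exact h1.le
  have hsub : Metric.ball p' h ⊆ Metric.ball q (2 * h) := by
    apply Metric.ball_subset_ball'
    rw [hd]; linarith
  rw [Jen_rot k hinv hn]
  unfold Jen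
  refine (lintegral_mono_set hsub).trans (lintegral_mono fun x => lintegral_mono_set hsub)

lemma lintegral_Jen_le (k : Euc N → Euc N → ENNReal) (hk : Measurable (Function.uncurry k)) (h : ℝ) :
    ∫⁻ q, Jen k q h ≤ volume (Metric.ball (0 : Euc N) h) * ∫⁻ x, ∫⁻ y, k x y := by
  have hK : Measurable (fun x => ∫⁻ y, k x y) := hk.lintegral_prod_right'
  calc ∫⁻ q, Jen k q h ≤ ∫⁻ q, ∫⁻ x, (Metric.ball q h).indicator (fun x => ∫⁻ y, k x y) x := by
        refine lintegral_mono fun q => ?_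
        simp only []
        rw [lintegral_indicator measurableSet_ball]
        exact lintegral_mono fun x => setLIntegral_le_lintegral _ _
    _ = ∫⁻ x, ∫⁻ q, (Metric.ball x h).indicator (fun _ => ∫⁻ y, k x y) q := by
        rw [lintegral_lintegral_swap]
        · refine lintegral_congr fun x => lintegral_congr fun q => ?_
          simp only [indicator, Metric.mem_ball, dist_comm]
        · apply Measurable.aemeasurable
          have : (Function.uncurry fun (q x : Euc N) =>
              (Metric.ball q h).indicator (fun x => ∫⁻ y, k x y) x) =
              {z : Euc N × Euc N | dist z.2 z.1 < h}.indicator (fun z => ∫⁻ y, k z.2 y) := by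
            ext z; simp [indicator, Function.uncurry]
          rw [this]
          exact (hK.comp measurable_snd).indicator
            (measurableSet_lt (by fun_prop) measurable_const)
    _ = ∫⁻ x, volume (Metric.ball (0 : Euc N) h) * ∫⁻ y, k x y := by
        refine lintegral_congr fun x => ?_
        rw [lintegral_indicator measurableSet_ball, setLIntegral_const,
          Measure.addHaar_ball_center, mul_comm]
    _ = _ := lintegral_const_mul _ hK

lemma shell_vol (hN : 2 ≤ N) {a h : ℝ} (ha : 0 < a) (hh : 0 < h) :
    ENNReal.ofReal (h * a ^ (N - 1) * (volume (Metric.ball (0 : Euc N) 1)).toReal) ≤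
      volume (Metric.ball (0 : Euc N) (a + h) \ Metric.closedBall 0 a) := by
  have : Nonempty (Fin N) := ⟨⟨0, by omega⟩⟩
  have hv1 := vol_ball_real (0 : Euc N) ha
  have hv2 := vol_ball_real (0 : Euc N) (by linarith : 0 < a + h)
  rw [measure_sdiff (Metric.closedBall_subset_ball (by linarith))
    measurableSet_closedBall.nullMeasurableSet measure_closedBall_lt_top.ne,
    Measure.addHaar_closedBall_eq_addHaar_ball, hv1, hv2,
    ← ENNReal.ofReal_sub _ (by positivity)]
  apply ENNReal.ofReal_le_ofReal
  rw [← sub_mul]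
  apply mul_le_mul_of_nonneg_right _ ENNReal.toReal_nonneg
  obtain ⟨n, rfl⟩ : ∃ n, N = n + 1 := ⟨N - 1, by omega⟩
  simp only [Nat.add_sub_cancel]
  have : a ^ n ≤ (a + h) ^ n := by gcongr; linarith
  have h2 : (a + h) * a ^ n ≤ (a + h) * (a + h) ^ n := by gcongr
  rw [pow_succ, pow_succ]
  nlinarith

lemma Jen_bound (hN : 2 ≤ N) (k : Euc N → Euc N → ENNReal) (hk : Measurable (Function.uncurry k))
    (hinv : ∀ (T : Euc N ≃ₗᵢ[ℝ] Euc N) x y, k (T x) (T y) = k x y)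
    {p : Euc N} {h : ℝ} (hp : 0 < ‖p‖) (hh : 0 < h) :
    Jen k p h * ENNReal.ofReal (h * ‖p‖ ^ (N - 1) * (volume (Metric.ball (0 : Euc N) 1)).toReal) ≤
      ENNReal.ofReal ((2 * h) ^ N * (volume (Metric.ball (0 : Euc N) 1)).toReal)
        * ∫⁻ x, ∫⁻ y, k x y := by
  set S := Metric.ball (0 : Euc N) (‖p‖ + h) \ Metric.closedBall 0 ‖p‖ with hS
  calc _ ≤ Jen k p h * volume S := by gcongr; exact shell_vol hN hp hh
    _ = ∫⁻ q in S, Jen k p h := by rw [setLIntegral_const]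
    _ ≤ ∫⁻ q in S, Jen k q (2 * h) := by
        refine setLIntegral_mono' (measurableSet_ball.diff measurableSet_closedBall) ?_
        intro q hq
        simp only [hS, Set.mem_sdiff, Metric.mem_ball, Metric.mem_closedBall, dist_zero_right,
          not_le] at hq
        exact Jen_le_shift k hinv hq.2 hq.1
    _ ≤ ∫⁻ q, Jen k q (2 * h) := setLIntegral_le_lintegral _ _
    _ ≤ _ := by
        rw [← vol_ball_real (0 : Euc N) (by linarith : 0 < 2 * h)]
        exact lintegral_Jen_le k hk _

lemma jensen_sq {D : Set (Euc N)} (hD : volume D ≠ ⊤) (hD0 : volume D ≠ 0) {g : Euc N → ℝ}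
    (hg : IntegrableOn g D) (hg2 : IntegrableOn (fun x => g x ^ 2) D) (c : ℝ) :
    ENNReal.ofReal ((c - ⨍ x in D, g x) ^ 2) * volume D ≤
      ∫⁻ x in D, ENNReal.ofReal ((c - g x) ^ 2) := by
  set m := ⨍ x in D, g x with hm
  have hV : 0 < volume.real D := ENNReal.toReal_pos hD0 hD
  have hI : ∫ x in D, g x = m * volume.real D := by
    rw [hm, setAverage_eq]; simp; field_simp
  have hc : IntegrableOn (fun _ : Euc N => (1 : ℝ)) D := integrableOn_const hD
  have e1 : IntegrableOn (fun x => (c - g x) ^ 2) D := by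
    have : (fun x => (c - g x) ^ 2) = fun x => (c ^ 2 * 1 - (2 * c) * g x) + g x ^ 2 := by
      ext x; ring
    rw [this]
    exact ((hc.const_mul _).sub (hg.const_mul _)).add hg2
  have e2 : ∫ x in D, (c - g x) ^ 2 = (c - m) ^ 2 * volume.real D + ∫ x in D, (m - g x) ^ 2 := by
    have e3 : IntegrableOn (fun x => (m - g x) ^ 2) D := by
      have : (fun x => (m - g x) ^ 2) = fun x => (m ^ 2 * 1 - (2 * m) * g x) + g x ^ 2 := by
        ext x; ring
      rw [this]
      exact ((hc.const_mul _).sub (hg.const_mul _)).add hg2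
    have : (fun x => (c - g x) ^ 2) =
        fun x => ((c ^ 2 - m ^ 2) * 1 - (2 * (c - m)) * g x) + (m - g x) ^ 2 := by
      ext x; ring
    have i1 : Integrable (fun x => (c ^ 2 - m ^ 2) * 1 - (2 * (c - m)) * g x)
      (volume.restrict D) := (hc.const_mul _).sub (hg.const_mul _)
    rw [this, integral_add i1 e3,
      integral_sub (hc.const_mul _) (hg.const_mul _), integral_const_mul, integral_const_mul, hI]
    simp
    ring
  rw [← ofReal_integral_eq_lintegral_ofReal e1 (Eventually.of_forall fun x => sq_nonneg _), e2,
    ← ENNReal.ofReal_toReal hD, ← ENNReal.ofReal_mul (sq_nonneg _)]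
  apply ENNReal.ofReal_le_ofReal
  have : 0 ≤ ∫ x in D, (m - g x) ^ 2 := integral_nonneg fun x => sq_nonneg _
  simp only [Measure.real]
  linarith

lemma avg_diff {D D' : Set (Euc N)} (hD : volume D ≠ ⊤) (hD0 : volume D ≠ 0)
    (hD' : volume D' ≠ ⊤) (hD0' : volume D' ≠ 0) {g : Euc N → ℝ}
    (hg : Integrable g) (hg2 : Integrable (fun x => g x ^ 2)) :
    ENNReal.ofReal (((⨍ x in D, g x) - ⨍ x in D', g x) ^ 2) * (volume D * volume D') ≤
      ∫⁻ x in D', ∫⁻ y in D, ENNReal.ofReal ((g x - g y) ^ 2) := by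
  calc _ = (ENNReal.ofReal (((⨍ x in D, g x) - ⨍ x in D', g x) ^ 2) * volume D') * volume D := by
        ring
    _ ≤ (∫⁻ x in D', ENNReal.ofReal (((⨍ y in D, g y) - g x) ^ 2)) * volume D := by
        gcongr
        exact jensen_sq hD' hD0' hg.integrableOn hg2.integrableOn _
    _ = ∫⁻ x in D', ENNReal.ofReal (((⨍ y in D, g y) - g x) ^ 2) * volume D := by
        rw [lintegral_mul_const' _ _ hD]
    _ ≤ _ := by
        refine lintegral_mono fun x => ?_
        refine le_trans (le_of_eq ?_) (jensen_sq hD hD0 hg.integrableOn hg2.integrableOn (g x))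
        congr 2; ring

/-- The truncated kernel. -/
def kerE (s : ℝ) (u : Euc N → ℝ) (x y : Euc N) : ENNReal :=
  (unitBall N ×ˢ unitBall N).indicator
    (fun z : Euc N × Euc N => ENNReal.ofReal ((u z.1 - u z.2) ^ 2 / ‖z.1 - z.2‖ ^ ((N : ℝ) + 2 * s)))
    (x, y)

lemma kerE_meas (s : ℝ) {u : Euc N → ℝ} (hu : Continuous u) :
    Measurable (Function.uncurry (kerE s u)) := by
  have hum := hu.measurable
  have : Function.uncurry (kerE s u) = (unitBall N ×ˢ unitBall N).indicator
    (fun z : Euc N × Euc N =>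
      ENNReal.ofReal ((u z.1 - u z.2) ^ 2 / ‖z.1 - z.2‖ ^ ((N : ℝ) + 2 * s))) := by
    ext z; rfl
  rw [this]
  apply Measurable.indicator
  · fun_prop
  · exact measurableSet_ball.prod measurableSet_ball

lemma kerE_inv (s : ℝ) {u : Euc N → ℝ} (hu : IsRadial N u) (T : Euc N ≃ₗᵢ[ℝ] Euc N) (x y : Euc N) :
    kerE s u (T x) (T y) = kerE s u x y := by
  have h1 : ∀ x, u (T x) = u x := fun x => hu _ _ (T.norm_map x)
  simp only [kerE, indicator, mem_prod, unitBall, Metric.mem_ball, dist_zero_right, T.norm_map, h1,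
    ← map_sub]

lemma kerE_energy (hN : 2 ≤ N) {s : ℝ} (hs : s < 1) {u : Euc N → ℝ}
    (hu : testFun N (unitBall N) u) :
    ∃ E : ℝ, 0 ≤ E ∧ ∫⁻ x, ∫⁻ y, kerE s u x y = ENNReal.ofReal E ∧
      gagliardo N s (unitBall N) u = cNs N s / 2 * E := by
  obtain ⟨hsm, hcs, -⟩ := hu
  have hum := hsm.continuous.measurable
  obtain ⟨L, hL⟩ := (hsm.of_le (by simp) : ContDiff ℝ 1 u).lipschitzWith_of_hasCompactSupport
    hcs one_ne_zero
  set B := unitBall N with hB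
  have mB : MeasurableSet B := measurableSet_ball
  set K : Euc N → Euc N → ℝ := fun x y => (u x - u y) ^ 2 / ‖x - y‖ ^ ((N : ℝ) + 2 * s) with hK
  have hK0 : ∀ x y, 0 ≤ K x y := fun x y => by positivity
  have hKm : Measurable (Function.uncurry K) := by
    simp only [hK, Function.uncurry_def]; fun_prop
  have hKm1 : ∀ x, Measurable (K x) := fun x => hKm.comp measurable_prodMk_left
  have hker : ∀ x y, kerE s u x y = B.indicator
      (fun x => B.indicator (fun y => ENNReal.ofReal (K x y)) y) x := by
    intro x y
    by_cases hx : x ∈ B <;> by_cases hy : y ∈ B <;> simp [kerE, hx, hy, K, ← hB]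
  -- dominating function
  set g : Euc N → ℝ := fun z => (L : ℝ) ^ 2 * ‖z‖ ^ (-((N : ℝ) + 2 * s - 2)) with hg
  have hgm : Measurable g := by simp only [hg]; fun_prop
  have hg0 : ∀ z, 0 ≤ g z := fun z => by positivity
  have hgi : IntegrableOn g (Metric.ball 0 2) := by
    refine integrableOn_ball_of_norm_le_rpow (C := (L : ℝ) ^ 2) (α := (N : ℝ) + 2 * s - 2) ?_ ?_ ?_ ?_
    · simp; omega
    · simp; linarith
    · refine Eventually.of_forall fun x => ?_
      rw [Real.norm_of_nonneg (hg0 x)]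
    · exact hgm.aestronglyMeasurable
  have hKg : ∀ x y, K x y ≤ g (x - y) := by
    intro x y
    simp only [hK, hg]
    rcases eq_or_ne x y with rfl | hxy
    · simp; positivity
    have hpos : 0 < ‖x - y‖ := norm_pos_iff.2 (sub_ne_zero.2 hxy)
    have h1 : |u x - u y| ≤ L * ‖x - y‖ := by
      have := hL.dist_le_mul x y
      rwa [Real.dist_eq, dist_eq_norm] at this
    have h2 : (u x - u y) ^ 2 ≤ (L * ‖x - y‖) ^ 2 := by
      rw [← sq_abs]; gcongr
    rw [div_le_iff₀ (by positivity), mul_assoc, ← Real.rpow_add hpos]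
    have : -((N : ℝ) + 2 * s - 2) + (N + 2 * s) = (2 : ℕ) := by push_cast; ring
    rw [this, Real.rpow_natCast]
    linarith [mul_pow (L : ℝ) ‖x - y‖ 2]
  set C := ∫⁻ z in Metric.ball (0 : Euc N) 2, ENNReal.ofReal (g z) with hC
  have hCfin : C < ⊤ := by
    have := hgi.2
    rw [hasFiniteIntegral_iff_ofReal (Eventually.of_forall hg0)] at this
    exact this
  have hinner : ∀ x ∈ B, ∫⁻ y in B, ENNReal.ofReal (K x y) ≤ C := by
    intro x hx
    calc ∫⁻ y in B, ENNReal.ofReal (K x y)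
        ≤ ∫⁻ y in B, (Metric.ball (0 : Euc N) 2).indicator (fun z => ENNReal.ofReal (g z)) (x - y) := by
          refine setLIntegral_mono' mB fun y hy => ?_
          rw [indicator_of_mem]
          · exact ENNReal.ofReal_le_ofReal (hKg x y)
          · simp only [hB, unitBall, Metric.mem_ball, dist_zero_right] at *
            linarith [norm_sub_le x y]
      _ ≤ ∫⁻ y, (Metric.ball (0 : Euc N) 2).indicator (fun z => ENNReal.ofReal (g z)) (x - y) :=
          setLIntegral_le_lintegral _ _
      _ = ∫⁻ z, (Metric.ball (0 : Euc N) 2).indicator (fun z => ENNReal.ofReal (g z)) z :=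
          lintegral_sub_left_eq_self _ x
      _ = C := lintegral_indicator measurableSet_ball _
  have hlin : ∫⁻ x, ∫⁻ y, kerE s u x y = ∫⁻ x in B, ∫⁻ y in B, ENNReal.ofReal (K x y) := by
    rw [← lintegral_indicator mB]
    refine lintegral_congr fun x => ?_
    by_cases hx : x ∈ B
    · simp only [hker, indicator_of_mem hx]
      rw [lintegral_indicator mB]
    · simp [hker, indicator_of_notMem hx]
  have hfin : ∫⁻ x in B, ∫⁻ y in B, ENNReal.ofReal (K x y) < ⊤ := by
    calc _ ≤ ∫⁻ x in B, C := setLIntegral_mono' mB hinner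
      _ = C * volume B := setLIntegral_const _ _
      _ < ⊤ := ENNReal.mul_lt_top hCfin measure_ball_lt_top
  refine ⟨(∫⁻ x in B, ∫⁻ y in B, ENNReal.ofReal (K x y)).toReal, ENNReal.toReal_nonneg, ?_, ?_⟩
  · rw [ENNReal.ofReal_toReal hfin.ne, hlin]
  · unfold gagliardo
    congr 1
    have hin : ∀ x, ∫ y in B, K x y = (∫⁻ y in B, ENNReal.ofReal (K x y)).toReal := fun x =>
      integral_eq_lintegral_of_nonneg_ae (Eventually.of_forall (hK0 x))
        (hKm1 x).aestronglyMeasurable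
    have hm : Measurable fun x => ∫⁻ y in B, ENNReal.ofReal (K x y) :=
      Measurable.lintegral_prod_right' (f := fun z : Euc N × Euc N => ENNReal.ofReal (K z.1 z.2))
        hKm.ennreal_ofReal
    change ∫ x in B, ∫ y in B, K x y = _
    simp_rw [hin]
    rw [integral_toReal hm.aemeasurable]
    filter_upwards [ae_restrict_mem mB] with x hx
    exact (hinner x hx).trans_lt hCfin

lemma alg_aux {A H P Q E ω h t hn : ℝ} (hω : ω ≠ 0) (e3 : P * Q = 1) (ht : t ≠ 0) :
    A * (hn * h * H) * (t * hn * ω * E) =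
      A * (t * t) / ω ^ 2 * H * P * E * (hn * ω * (hn / t * ω) * (h * Q * ω)) := by
  have : A * (t * t) / ω ^ 2 * H * P * E * (hn * ω * (hn / t * ω) * (h * Q * ω)) =
    A * (t * t) / ω ^ 2 * H * E * (hn * ω * (hn / t * ω) * (h * ω)) * (P * Q) := by ring
  rw [this, e3]
  field_simp

lemma step_real (hN : 2 ≤ N) {s : ℝ} (hs0 : 1 / 2 < s) {u : Euc N → ℝ}
    (hu : testFun N (unitBall N) u) (hr : IsRadial N u) {E : ℝ} (hE0 : 0 ≤ E)
    (hE : ∫⁻ x, ∫⁻ y, kerE s u x y = ENNReal.ofReal E)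
    {p p' : Euc N} {h b : ℝ} (hh : 0 < h) (hb : 0 < b) (hbp : b ≤ ‖p‖)
    (hsub : Metric.ball p' (h / 2) ⊆ Metric.ball p h) (hpB : Metric.ball p h ⊆ unitBall N) :
    ((⨍ x in Metric.ball p h, u x) - ⨍ x in Metric.ball p' (h / 2), u x) ^ 2 ≤
      (2 ^ (3 * N + 2 * s) / (volume (Metric.ball (0 : Euc N) 1)).toReal ^ 2) *
        h ^ (2 * s - 1) * b ^ (1 - (N : ℝ)) * E := by
  obtain ⟨hsm, hcs, -⟩ := hu
  set ω := (volume (Metric.ball (0 : Euc N) 1)).toReal with hω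
  have hω0 : 0 < ω := ENNReal.toReal_pos (Metric.measure_ball_pos _ _ one_pos).ne'
    measure_ball_lt_top.ne
  set d := ((⨍ x in Metric.ball p h, u x) - ⨍ x in Metric.ball p' (h / 2), u x) with hd
  have hp : 0 < ‖p‖ := hb.trans_le hbp
  have h2 : 0 < h / 2 := by linarith
  have i1 : Integrable u := hsm.continuous.integrable_of_hasCompactSupport hcs
  have i2 : Integrable (fun x => u x ^ 2) := by
    refine (hsm.continuous.pow 2).integrable_of_hasCompactSupport ?_
    have h3 := hcs.comp_left (g := fun t : ℝ => t ^ 2) (by norm_num)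
    exact h3
  have a1 := avg_diff (D := Metric.ball p h) (D' := Metric.ball p' (h / 2))
    measure_ball_lt_top.ne (Metric.measure_ball_pos _ _ hh).ne'
    measure_ball_lt_top.ne (Metric.measure_ball_pos _ _ h2).ne' i1 i2
  have a2 : ∫⁻ x in Metric.ball p' (h / 2), ∫⁻ y in Metric.ball p h, ENNReal.ofReal ((u x - u y) ^ 2)
      ≤ ENNReal.ofReal ((2 * h) ^ ((N : ℝ) + 2 * s)) * Jen (kerE s u) p h := by
    unfold Jen
    rw [← lintegral_const_mul' _ _ ENNReal.ofReal_ne_top]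
    refine (lintegral_mono_set hsub).trans ?_
    refine setLIntegral_mono' measurableSet_ball fun x hx => ?_
    rw [← lintegral_const_mul' _ _ ENNReal.ofReal_ne_top]
    refine setLIntegral_mono' measurableSet_ball fun y hy => ?_
    unfold kerE
    rw [indicator_of_mem (mk_mem_prod (hpB hx) (hpB hy)), ← ENNReal.ofReal_mul (by positivity)]
    apply ENNReal.ofReal_le_ofReal
    simp only
    rcases eq_or_ne x y with rfl | hxy
    · simp
    have hpos : 0 < ‖x - y‖ := norm_pos_iff.2 (sub_ne_zero.2 hxy)
    have hle : ‖x - y‖ ≤ 2 * h := by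
      rw [← dist_eq_norm]
      have := dist_triangle_right x y p
      rw [Metric.mem_ball] at hx hy
      linarith
    have hpow : ‖x - y‖ ^ ((N : ℝ) + 2 * s) ≤ (2 * h) ^ ((N : ℝ) + 2 * s) :=
      Real.rpow_le_rpow hpos.le hle (by positivity)
    rw [mul_div_assoc', le_div_iff₀ (by positivity), mul_comm]
    gcongr
  have a3 := Jen_bound hN (kerE s u) (kerE_meas s hsm.continuous) (kerE_inv s hr) hp hh
  rw [hE] at a3
  have a4 : ENNReal.ofReal (d ^ 2) * (volume (Metric.ball p h) * volume (Metric.ball p' (h / 2))) *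
      ENNReal.ofReal (h * ‖p‖ ^ (N - 1) * ω) ≤ ENNReal.ofReal ((2 * h) ^ ((N : ℝ) + 2 * s)) *
      (ENNReal.ofReal ((2 * h) ^ N * ω) * ENNReal.ofReal E) := by
    calc _ ≤ ENNReal.ofReal ((2 * h) ^ ((N : ℝ) + 2 * s)) * Jen (kerE s u) p h *
          ENNReal.ofReal (h * ‖p‖ ^ (N - 1) * ω) := mul_le_mul' (a1.trans a2) le_rfl
      _ = ENNReal.ofReal ((2 * h) ^ ((N : ℝ) + 2 * s)) * (Jen (kerE s u) p h *
          ENNReal.ofReal (h * ‖p‖ ^ (N - 1) * ω)) := by ring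
      _ ≤ _ := mul_le_mul' le_rfl a3
  rw [vol_ball_real _ hh, vol_ball_real _ h2, ← hω, ← ENNReal.ofReal_mul (by positivity),
    ← ENNReal.ofReal_mul (by positivity), ← ENNReal.ofReal_mul (by positivity),
    ← ENNReal.ofReal_mul (by positivity), ← ENNReal.ofReal_mul (by positivity),
    ENNReal.ofReal_le_ofReal_iff (by positivity)] at a4
  have a5 : d ^ 2 ≤ (2 ^ (3 * N + 2 * s) / ω ^ 2) * h ^ (2 * s - 1) * ‖p‖ ^ (1 - (N : ℝ)) * E := by
    have e1 : (2 * h) ^ ((N : ℝ) + 2 * s) = 2 ^ ((N : ℝ) + 2 * s) * (h ^ N * h * h ^ (2 * s - 1)) := by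
      rw [Real.mul_rpow (by norm_num) hh.le, ← pow_succ, ← Real.rpow_natCast h, ← Real.rpow_add hh]
      congr 2; push_cast; ring
    have e2 : (2 : ℝ) ^ (3 * N + 2 * s) = 2 ^ ((N : ℝ) + 2 * s) * (2 ^ N * 2 ^ N) := by
      rw [← Real.rpow_natCast (2 : ℝ) N, ← Real.rpow_add two_pos, ← Real.rpow_add two_pos]
      congr 1; ring
    have e3 : ‖p‖ ^ (1 - (N : ℝ)) * ‖p‖ ^ (N - 1) = 1 := by
      rw [← Real.rpow_natCast, ← Real.rpow_add hp, Nat.cast_sub (by omega)]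
      simp
    have hF : 0 < (h ^ N * ω * ((h / 2) ^ N * ω)) * (h * ‖p‖ ^ (N - 1) * ω) := by positivity
    refine le_of_mul_le_mul_right ?_ hF
    calc _ = d ^ 2 * (h ^ N * ω * ((h / 2) ^ N * ω)) * (h * ‖p‖ ^ (N - 1) * ω) := by ring
      _ ≤ _ := a4
      _ = _ := by
        rw [e1, e2, mul_pow, div_pow]
        exact alg_aux hω0.ne' e3 (by positivity)
  refine a5.trans ?_
  have : ‖p‖ ^ (1 - (N : ℝ)) ≤ b ^ (1 - (N : ℝ)) := by
    apply Real.rpow_le_rpow_of_nonpos hb hbp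
    have : (2 : ℝ) ≤ N := by exact_mod_cast hN
    linarith
  gcongr

lemma one_sided (hN : 2 ≤ N) {s : ℝ} (hs0 : 1 / 2 < s) {u : Euc N → ℝ}
    (hu : testFun N (unitBall N) u) (hr : IsRadial N u) {E : ℝ} (hE0 : 0 ≤ E)
    (hE : ∫⁻ x, ∫⁻ y, kerE s u x y = ENNReal.ofReal E)
    {z w : Euc N} (hw : ‖w‖ = 1) {H b : ℝ} (hH : 0 < H) (hHb : H ≤ b)
    (hnorm : ∀ t, 0 < t → t ≤ H → b ≤ ‖z + t • w‖)
    (hB : Metric.ball (z + H • w) H ⊆ unitBall N) :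
    |(⨍ x in Metric.ball (z + H • w) H, u x) - u z| ≤
      √(2 ^ (3 * N + 2 * s) / (volume (Metric.ball (0 : Euc N) 1)).toReal ^ 2) /
        (1 - (1 / 2 : ℝ) ^ (s - 1 / 2)) * (b ^ (s - (N : ℝ) / 2) * √E) := by
  have hb : 0 < b := hH.trans_le hHb
  set C : ℝ := 2 ^ (3 * N + 2 * s) / (volume (Metric.ball (0 : Euc N) 1)).toReal ^ 2 with hC
  have hC0 : 0 ≤ C := by positivity
  set q : ℝ := (1 / 2 : ℝ) ^ (s - 1 / 2) with hq
  have hq0 : 0 < q := by positivity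
  have hq1 : q < 1 := Real.rpow_lt_one (by norm_num) (by norm_num) (by linarith)
  have hnest : ∀ t t' : ℝ, t ≤ t' → Metric.ball (z + t • w) t ⊆ Metric.ball (z + t' • w) t' := by
    intro t t' h
    apply Metric.ball_subset_ball'
    have : z + t • w - (z + t' • w) = (t - t') • w := by rw [sub_smul]; abel
    rw [dist_eq_norm, this, norm_smul, hw, Real.norm_of_nonpos (by linarith)]
    linarith
  set h : ℕ → ℝ := fun k => H * (1 / 2 : ℝ) ^ k with hh
  have h0 : ∀ k, 0 < h k := fun k => by simp only [hh]; positivity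
  have hle : ∀ k, h k ≤ H := fun k => by
    simp only [hh]
    exact mul_le_of_le_one_right hH.le (pow_le_one₀ (by norm_num) (by norm_num))
  have hsucc : ∀ k, h (k + 1) = h k / 2 := fun k => by simp only [hh, pow_succ]; ring
  set m : ℕ → ℝ := fun k => ⨍ x in Metric.ball (z + h k • w) (h k), u x with hm
  set A : ℝ := √C * (b ^ (s - (N : ℝ) / 2) * √E) with hA
  have hA0 : 0 ≤ A := by positivity
  have hstep : ∀ k, dist (m k) (m (k + 1)) ≤ A * q ^ k := by
    intro k
    have hs1 := step_real hN hs0 hu hr hE0 hE (p := z + h k • w) (p' := z + (h k / 2) • w) (h0 k) hb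
      (hnorm _ (h0 k) (hle k)) (hnest _ _ (by linarith [h0 k])) ((hnest _ _ (hle k)).trans hB)
    rw [← hsucc, ← hC] at hs1
    rw [Real.dist_eq]
    refine abs_le_of_sq_le_sq ?_ (by positivity)
    refine hs1.trans ?_
    have e1 : h k ^ (2 * s - 1) = H ^ (2 * s - 1) * (q ^ k) ^ 2 := by
      simp only [hh]
      rw [Real.mul_rpow hH.le (by positivity)]
      congr 1
      rw [← Real.rpow_natCast (1 / 2 : ℝ) k, ← Real.rpow_mul (by norm_num), hq, ← pow_mul,
        ← Real.rpow_natCast, ← Real.rpow_mul (by norm_num)]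
      congr 1; push_cast; ring
    have e2 : H ^ (2 * s - 1) ≤ b ^ (2 * s - 1) :=
      Real.rpow_le_rpow hH.le hHb (by linarith)
    have e3 : (b ^ (s - (N : ℝ) / 2)) ^ 2 = b ^ (2 * s - 1) * b ^ (1 - (N : ℝ)) := by
      rw [← Real.rpow_natCast, ← Real.rpow_mul hb.le, ← Real.rpow_add hb]
      congr 1; push_cast; ring
    have e4 : (A * q ^ k) ^ 2 = C * (b ^ (2 * s - 1) * (q ^ k) ^ 2) * b ^ (1 - (N : ℝ)) * E := by
      rw [hA, mul_pow, mul_pow, mul_pow, Real.sq_sqrt hC0, Real.sq_sqrt hE0, e3]; ring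
    rw [e1, e4]
    gcongr
  have hlim : Tendsto m atTop (𝓝 (u z)) := by
    rw [Metric.tendsto_atTop]
    intro ε hε
    obtain ⟨δ, hδ, hδ'⟩ := Metric.continuousAt_iff.1 (hu.1.continuous.continuousAt (x := z)) (ε / 2)
      (half_pos hε)
    have ht : Tendsto h atTop (𝓝 0) := by
      have := (tendsto_pow_atTop_nhds_zero_of_lt_one (r := (1 / 2 : ℝ)) (by norm_num)
        (by norm_num)).const_mul H
      simpa [hh] using this
    obtain ⟨n, hn⟩ := Metric.tendsto_atTop.1 ht (δ / 2) (half_pos hδ)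
    refine ⟨n, fun k hk => ?_⟩
    have hk' : h k < δ / 2 := by
      have := hn k hk
      rw [Real.dist_0_eq_abs] at this
      exact (le_abs_self _).trans_lt this
    have : m k ∈ Metric.closedBall (u z) (ε / 2) := by
      refine (convex_closedBall (u z) (ε / 2)).set_average_mem Metric.isClosed_closedBall
        (Metric.measure_ball_pos _ _ (h0 k)).ne' measure_ball_lt_top.ne ?_
        (hu.1.continuous.integrable_of_hasCompactSupport hu.2.1).integrableOn
      filter_upwards [ae_restrict_mem measurableSet_ball] with x hx
      have hd : dist x z < δ := by
        have h1 := dist_triangle x (z + h k • w) z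
        have h2 : dist (z + h k • w) z = h k := by
          rw [dist_eq_norm, add_sub_cancel_left, norm_smul, hw, Real.norm_of_nonneg (h0 k).le, mul_one]
        rw [Metric.mem_ball] at hx
        linarith
      exact (hδ' hd).le
    rw [Metric.mem_closedBall] at this
    linarith
  have := dist_le_of_le_geometric_of_tendsto₀ q A hq1 hstep hlim
  have hm0 : m 0 = ⨍ x in Metric.ball (z + H • w) H, u x := by simp [hm, hh]
  rw [hm0, Real.dist_eq] at this
  refine this.trans (le_of_eq ?_)
  rw [hA]; ring

lemma two_points (hN : 2 ≤ N) {s : ℝ} (hs0 : 1 / 2 < s) {u : Euc N → ℝ}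
    (hu : testFun N (unitBall N) u) (hr : IsRadial N u) {E : ℝ} (hE0 : 0 ≤ E)
    (hE : ∫⁻ x, ∫⁻ y, kerE s u x y = ENNReal.ofReal E)
    {e : Euc N} (he : ‖e‖ = 1) {a b : ℝ} (hb : 0 < b) (hba : b < a) (hab : a ≤ 2 * b)
    (ha : a ≤ 1) :
    |u (b • e) - u (a • e)| ≤
      2 * (√(2 ^ (3 * N + 2 * s) / (volume (Metric.ball (0 : Euc N) 1)).toReal ^ 2) /
        (1 - (1 / 2 : ℝ) ^ (s - 1 / 2))) * (b ^ (s - (N : ℝ) / 2) * √E) := by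
  set H := (a - b) / 2 with hH
  have hH0 : 0 < H := by rw [hH]; linarith
  have hHb : H ≤ b := by rw [hH]; linarith
  have c1 : b • e + H • e = ((a + b) / 2) • e := by rw [← add_smul]; congr 1; rw [hH]; ring
  have c2 : a • e + H • (-e) = ((a + b) / 2) • e := by
    rw [smul_neg, ← sub_eq_add_neg, ← sub_smul]; congr 1; rw [hH]; ring
  have hsub : Metric.ball (((a + b) / 2) • e) H ⊆ unitBall N := by
    apply Metric.ball_subset_ball'
    rw [dist_zero_right, norm_smul, he, Real.norm_of_nonneg (by linarith), hH]
    linarith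
  have i1 := one_sided hN hs0 hu hr hE0 hE (z := b • e) (w := e) he hH0 hHb (by
    intro t ht _
    rw [← add_smul, norm_smul, he, Real.norm_of_nonneg (by linarith)]; linarith) (by rwa [c1])
  have i2 := one_sided hN hs0 hu hr hE0 hE (z := a • e) (w := -e) (by rwa [norm_neg]) hH0 hHb (by
    intro t ht htH
    rw [smul_neg, ← sub_eq_add_neg, ← sub_smul, norm_smul, he,
      Real.norm_of_nonneg (by linarith)]; linarith) (by rwa [c2])
  rw [c1] at i1
  rw [c2] at i2
  rw [abs_sub_comm] at i1
  calc |u (b • e) - u (a • e)| ≤ _ := abs_sub_le _ (⨍ x in Metric.ball (((a + b) / 2) • e) H, u x) _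
    _ ≤ _ := add_le_add i1 i2
    _ = _ := by ring

lemma cNs_pos {s : ℝ} (hs0 : 0 < s) (hs : s < 1) : 0 < cNs N s := by
  unfold cNs
  have h1 : 0 < Real.Gamma (((N : ℝ) + 2 * s) / 2) := Real.Gamma_pos_of_pos (by positivity)
  have h2 : 0 < Real.Gamma (1 - s) := Real.Gamma_pos_of_pos (by linarith)
  positivity

end helpers

/-- the radial pointwise bound u(x)² ≤ d·|x|^{2s−N}·Q_{N,s,B}(u). -/
theorem statement14 (N : ℕ) (hN : 2 ≤ N) (s : ℝ) (hs : s ∈ Set.Ioo (1/2 : ℝ) 1) :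
    ∃ d : ℝ, 0 < d ∧ ∀ u : Euc N → ℝ, testFun N (unitBall N) u → IsRadial N u →
      ∀ x ∈ unitBall N, x ≠ 0 →
        (u x) ^ 2 ≤ d * ‖x‖ ^ (2 * s - (N : ℝ)) * gagliardo N s (unitBall N) u := by
  obtain ⟨hs0, hs1⟩ := hs
  have hN' : (2 : ℝ) ≤ N := by exact_mod_cast hN
  have hc : 0 < cNs N s := cNs_pos (by linarith) hs1
  set C : ℝ := 2 * (√(2 ^ (3 * N + 2 * s) / (volume (Metric.ball (0 : Euc N) 1)).toReal ^ 2) /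
        (1 - (1 / 2 : ℝ) ^ (s - 1 / 2))) with hC
  have hω0 : 0 < (volume (Metric.ball (0 : Euc N) 1)).toReal :=
    ENNReal.toReal_pos (Metric.measure_ball_pos _ _ one_pos).ne' measure_ball_lt_top.ne
  have hC0 : 0 < C := by
    have : (1 / 2 : ℝ) ^ (s - 1 / 2) < 1 :=
      Real.rpow_lt_one (by norm_num) (by norm_num) (by linarith)
    have : 0 < 1 - (1 / 2 : ℝ) ^ (s - 1 / 2) := by linarith
    positivity
  set γ : ℝ := s - (N : ℝ) / 2 with hγ
  set θ : ℝ := 2 ^ γ with hθ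
  have hθ1 : θ < 1 := Real.rpow_lt_one_of_one_lt_of_neg (by norm_num) (by rw [hγ]; linarith)
  have hθ0 : 0 < 1 - θ := by linarith
  set M : ℝ := C / (1 - θ) with hM
  have hM0 : 0 < M := by positivity
  have hMC : M * θ + C = M := by rw [hM]; field_simp; ring
  refine ⟨M ^ 2 * (2 / cNs N s), by positivity, ?_⟩
  intro u hu hr x hx hx0
  obtain ⟨E, hE0, hE, hg⟩ := kerE_energy hN hs1 hu
  have hxp : 0 < ‖x‖ := norm_pos_iff.2 hx0
  set e : Euc N := (‖x‖)⁻¹ • x with he'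
  have he : ‖e‖ = 1 := by
    rw [he', norm_smul, norm_inv, norm_norm]; field_simp
  have hxe : x = ‖x‖ • e := by
    rw [he', smul_smul, mul_inv_cancel₀ hxp.ne', one_smul]
  have hout : ∀ b : ℝ, 1 ≤ b → u (b • e) = 0 := by
    intro b hb
    apply image_eq_zero_of_notMem_tsupport
    intro hmem
    have := hu.2.2 hmem
    simp only [unitBall, Metric.mem_ball, dist_zero_right, norm_smul, he, mul_one] at this
    rw [Real.norm_of_nonneg (by linarith)] at this
    linarith
  have key : ∀ n : ℕ, ∀ b : ℝ, 0 < b → 1 ≤ b * 2 ^ n → |u (b • e)| ≤ M * (b ^ γ * √E) := by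
    intro n
    induction n with
    | zero =>
      intro b hb h1
      rw [hout b (by simpa using h1)]
      simp; positivity
    | succ n ih =>
      intro b hb h1
      rcases le_or_gt 1 b with hb1 | hb1
      · rw [hout b hb1]; simp; positivity
      rcases le_or_gt 1 (2 * b) with hb2 | hb2
      · have := two_points hN hs0 hu hr hE0 hE he hb hb1 hb2 le_rfl
        rw [hout 1 le_rfl, sub_zero, ← hC] at this
        refine this.trans ?_
        gcongr
        have : 0 < M * θ := by positivity
        linarith
      · have i1 := two_points hN hs0 hu hr hE0 hE he hb (by linarith : b < 2 * b) le_rfl hb2.le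
        have i2 := ih (2 * b) (by linarith) (by rw [pow_succ] at h1; linarith)
        rw [← hC] at i1
        rw [Real.mul_rpow (by norm_num) hb.le, ← hθ] at i2
        have i3 := abs_sub_abs_le_abs_sub (u (b • e)) (u ((2 * b) • e))
        calc |u (b • e)| ≤ C * (b ^ γ * √E) + M * (θ * b ^ γ * √E) := by linarith
          _ = (M * θ + C) * (b ^ γ * √E) := by ring
          _ = _ := by rw [hMC]
  obtain ⟨n, hn⟩ := pow_unbounded_of_one_lt (‖x‖)⁻¹ (one_lt_two (α := ℝ))
  have hk := key n ‖x‖ hxp (by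
    rw [inv_lt_iff_one_lt_mul₀ hxp] at hn; linarith [mul_comm (2 ^ n : ℝ) ‖x‖])
  rw [← hxe] at hk
  have e3 : (‖x‖ ^ γ) ^ 2 = ‖x‖ ^ (2 * s - (N : ℝ)) := by
    rw [← Real.rpow_natCast, ← Real.rpow_mul hxp.le]
    congr 1; rw [hγ]; push_cast; ring
  calc u x ^ 2 = |u x| ^ 2 := (sq_abs _).symm
    _ ≤ (M * (‖x‖ ^ γ * √E)) ^ 2 := by gcongr
    _ = M ^ 2 * ‖x‖ ^ (2 * s - (N : ℝ)) * E := by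
      rw [mul_pow, mul_pow, e3, Real.sq_sqrt hE0]; ring
    _ = _ := by rw [hg]; field_simp
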